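/- Let M be a unital C*-algebra that is finite-dimensional as a complex vector space and let φ : M → M be a UP map. Then M_∞ = C_φ if and only if for every linear functional ρ : M → ℂ that vanishes identically on C_φ, the operator norms ‖ρ ∘ φ^n‖ tend to 0 as n → ∞. -/

import Mathlib

/-!
Positivity and unitality give Kadison's inequality, so the Schwarz defect
`φ(x* ∘ x) - φ(x)* ∘ φ(x)` is positive (`defect_nonneg`). By the parallelogram law the definite set
is then a subspace, and its self-adjoint part is closed under squaring (`sq_mem_definiteSet`).
In finite dimension the subspaces `φ^n(B_φ)` stabilize at `C_φ`, on which `φ` is bijective and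
preserves squares of self-adjoint elements, hence does not decrease their norms. This yields
`C_φ ⊆ M_∞` for every unital positive map (`multCore_subset_tailSystem`).

A linear functional `ρ` satisfies `‖ρ ∘ φ^n‖ → 0` exactly when it vanishes on `M_∞`: one direction
is a compactness argument based on the power-boundedness of `φ` (`tendsto_of_vanish_tailSystem`),
the other evaluates `ρ ∘ φ^n` on bounded preimages (`vanish_on_tailSystem_of_tendsto`). The right
side of the theorem thus says that every functional vanishing on `C_φ` vanishes on `M_∞`, which,
`C_φ` being a subspace, means `M_∞ ⊆ C_φ`.
-/

open Filter Topology

/-- The tail operator system `M_∞` of `φ`. -/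
def tailSystem {M : Type*} [NormedRing M] [NormedAlgebra ℂ M] (φ : M →ₗ[ℂ] M) : Set M :=
  {y | ∃ C > (0 : ℝ), ∀ n : ℕ, 1 ≤ n → ∃ x : M, ‖x‖ ≤ C ∧ (φ ^ n) x = y}

/-- The Jordan product `x ∘ y = (x·y + y·x)/2`. -/
noncomputable def jordan {M : Type*} [Ring M] [Algebra ℂ M] (x y : M) : M :=
  (2⁻¹ : ℂ) • (x * y + y * x)

/-- The definite set `M_φ = {x : φ(x* ∘ x) = φ(x)* ∘ φ(x)}` of `φ`. -/
noncomputable def definiteSet {M : Type*} [Ring M] [StarRing M] [Algebra ℂ M]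
    (φ : M →ₗ[ℂ] M) : Set M :=
  {x | φ (jordan (star x) x) = jordan (star (φ x)) (φ x)}

/-- `B_φ = {x : φ^n(x) ∈ M_φ for all n ≥ 0}`. -/
noncomputable def Bset {M : Type*} [Ring M] [StarRing M] [Algebra ℂ M]
    (φ : M →ₗ[ℂ] M) : Set M :=
  {x | ∀ n : ℕ, (φ ^ n) x ∈ definiteSet φ}

/-- The multiplicative core `C_φ = ⋂_{n ≥ 1} φ^n(B_φ)`. -/
noncomputable def multCore {M : Type*} [Ring M] [StarRing M] [Algebra ℂ M]
    (φ : M →ₗ[ℂ] M) : Set M :=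
  ⋂ (n : ℕ) (_ : 1 ≤ n), (φ ^ n) '' (Bset φ)

open ComplexStarModule

/-! ### Preliminaries -/

section Algebra

variable {M : Type*} [CStarAlgebra M]

/-- Real spectral values are roots of the minimal polynomial over `ℝ`. -/
lemma finite_real_spectrum [FiniteDimensional ℂ M] (a : M) : (spectrum ℝ a).Finite := by
  have : FiniteDimensional ℝ M := Module.Finite.trans ℂ M
  have hai : IsIntegral ℝ a := Algebra.IsIntegral.isIntegral a
  refine (Polynomial.rootSet_finite (minpoly ℝ a) ℝ).subset fun t ht => ?_
  rw [Polynomial.mem_rootSet]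
  refine ⟨minpoly.ne_zero hai, ?_⟩
  have h := spectrum.subset_polynomial_aeval a (minpoly ℝ a) ⟨t, ht, rfl⟩
  rw [minpoly.aeval] at h
  rcases subsingleton_or_nontrivial M with hM | hM
  · simp [spectrum.of_subsingleton] at ht
  · rw [spectrum.zero_eq] at h
    simpa using h

/-- For self-adjoint `a`, `b` this computes `x* ∘ x` with `x = a + i b`. -/
lemma jordan_star_self (a b : M) :
    jordan (a - Complex.I • b) (a + Complex.I • b) = a * a + b * b := by
  have hI : Complex.I * Complex.I = -1 := Complex.I_mul_I
  simp only [jordan, sub_mul, mul_add, add_mul, mul_sub, smul_mul_assoc, mul_smul_comm]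
  match_scalars <;> first | ring1 | linear_combination -hI

/-- The Schwarz defect `φ(x* ∘ x) - φ(x)* ∘ φ(x)`, whose zeros form the definite set. -/
noncomputable def defect (φ : M →ₗ[ℂ] M) (x : M) : M :=
  φ (jordan (star x) x) - jordan (star (φ x)) (φ x)

lemma mem_definiteSet_iff {φ : M →ₗ[ℂ] M} {x : M} : x ∈ definiteSet φ ↔ defect φ x = 0 :=
  sub_eq_zero.symm

lemma defect_parallelogram (φ : M →ₗ[ℂ] M) (x y : M) :
    defect φ (x + y) + defect φ (x - y) = (2 : ℂ) • defect φ x + (2 : ℂ) • defect φ y := by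
  simp only [defect, jordan, map_add, map_sub, map_smul, star_add, star_sub, add_mul, mul_add,
    sub_mul, mul_sub]
  module

lemma defect_smul (φ : M →ₗ[ℂ] M) (c : ℂ) (x : M) :
    defect φ (c • x) = (star c * c) • defect φ x := by
  simp only [defect, jordan, map_add, map_smul, star_smul, smul_mul_assoc, mul_smul_comm]
  module

lemma map_mem_Bset {φ : M →ₗ[ℂ] M} {x : M} (hx : x ∈ Bset φ) : φ x ∈ Bset φ := fun n => by
  have := hx (n + 1)
  rwa [pow_succ, Module.End.mul_apply] at this

lemma pow_mem_Bset {φ : M →ₗ[ℂ] M} {x : M} (hx : x ∈ Bset φ) (n : ℕ) :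
    (φ ^ n) x ∈ Bset φ := fun m => by
  have := hx (m + n)
  rwa [pow_add, Module.End.mul_apply] at this

lemma pow_unital {φ : M →ₗ[ℂ] M} (hunit : φ 1 = 1) (n : ℕ) : (φ ^ n) 1 = 1 := by
  induction n with
  | zero => simp
  | succ n ih => rw [pow_succ, Module.End.mul_apply, hunit, ih]

lemma pow_nonneg_of_pos [PartialOrder M] {φ : M →ₗ[ℂ] M} (hpos : ∀ x : M, 0 ≤ x → 0 ≤ φ x) (n : ℕ) :
    ∀ x : M, 0 ≤ x → 0 ≤ (φ ^ n) x := by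
  induction n with
  | zero => simp
  | succ n ih =>
    intro x hx
    rw [pow_succ', Module.End.mul_apply]
    exact hpos _ (ih x hx)

end Algebra

/-! ### Kadison's inequality -/

section Positive

variable {M : Type*} [CStarAlgebra M] [PartialOrder M] [StarOrderedRing M]

lemma isSelfAdjoint_map_of_pos {φ : M →ₗ[ℂ] M} (hpos : ∀ x : M, 0 ≤ x → 0 ≤ φ x)
    {a : M} (ha : IsSelfAdjoint a) : IsSelfAdjoint (φ a) :=
  ha.map' (PositiveLinearMap.mk₀ φ hpos)

lemma map_star_of_pos {φ : M →ₗ[ℂ] M} (hpos : ∀ x : M, 0 ≤ x → 0 ≤ φ x) (x : M) :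
    φ (star x) = star (φ x) :=
  map_star (PositiveLinearMap.mk₀ φ hpos) x

/-- Kadison's inequality `φ(a)² ≤ φ(a²)` for self-adjoint `a`. Writing `a = ∑ t pₜ` with spectral
projections `pₜ`, the difference is `∑ (t - φ(a)) φ(pₜ) (t - φ(a))`, a sum of positive elements. -/
lemma kadison [FiniteDimensional ℂ M] {φ : M →ₗ[ℂ] M} (hunit : φ 1 = 1)
    (hpos : ∀ x : M, 0 ≤ x → 0 ≤ φ x) {a : M} (ha : IsSelfAdjoint a) :
    φ a * φ a ≤ φ (a * a) := by
  classical
  have hfin := finite_real_spectrum a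
  set S := hfin.toFinset with hS
  -- The spectral projections of `a`; every function is continuous on the finite spectrum.
  set p : ℝ → M := fun t => cfc (fun s : ℝ => if s = t then (1 : ℝ) else 0) a with hp
  have hcont : ∀ f : ℝ → ℝ, ContinuousOn f (spectrum ℝ a) := fun f => hfin.continuousOn f
  have hp0 : ∀ t, 0 ≤ p t := fun t => cfc_nonneg fun s _ => by split_ifs <;> simp
  have hsum : ∀ f : ℝ → ℝ, cfc f a = ∑ t ∈ S, ((f t : ℝ) : ℂ) • p t := by
    intro f
    have h1 : ∀ t ∈ S, ((f t : ℝ) : ℂ) • p t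
        = cfc (fun s : ℝ => f t * if s = t then (1 : ℝ) else 0) a := by
      intro t _
      rw [cfc_const_mul _ _ _ (hcont _), Complex.coe_smul]
    rw [Finset.sum_congr rfl h1, ← cfc_sum _ _ _ fun _ _ => hcont _]
    refine cfc_congr fun s hs => ?_
    simp [Finset.sum_apply, hS, hs]
  have e0 : ∑ t ∈ S, φ (p t) = 1 := by
    have := hsum (fun _ => 1)
    rw [cfc_const_one ℝ a] at this
    rw [← hunit, this]; simp
  have e1 : φ a = ∑ t ∈ S, (t : ℂ) • φ (p t) := by
    have := hsum (fun t => t)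
    rw [cfc_id' ℝ a] at this
    conv_lhs => rw [this]
    simp
  have e2 : φ (a * a) = ∑ t ∈ S, ((t * t : ℝ) : ℂ) • φ (p t) := by
    have := hsum (fun t => t * t)
    rw [cfc_mul _ _ a (hcont _) (hcont _), cfc_id' ℝ a] at this
    rw [this]
    simp
  have key : φ (a * a) - φ a * φ a
      = ∑ t ∈ S, star ((t : ℂ) • (1 : M) - φ a) * φ (p t) * ((t : ℂ) • (1 : M) - φ a) := by
    have hst : ∀ t : ℝ, star ((t : ℂ) • (1 : M) - φ a) = (t : ℂ) • (1 : M) - φ a := by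
      intro t
      simp [(isSelfAdjoint_map_of_pos hpos ha).star_eq]
    have : ∀ t ∈ S, star ((t : ℂ) • (1 : M) - φ a) * φ (p t) * ((t : ℂ) • (1 : M) - φ a)
        = ((t * t : ℝ) : ℂ) • φ (p t) - ((t : ℂ) • φ (p t)) * φ a - φ a * ((t : ℂ) • φ (p t))
          + φ a * φ (p t) * φ a := by
      intro t _
      rw [hst]
      simp only [sub_mul, mul_sub, smul_mul_assoc, mul_smul_comm, one_mul, mul_one, smul_sub,
        smul_smul]
      push_cast
      abel
    rw [Finset.sum_congr rfl this, Finset.sum_add_distrib, Finset.sum_sub_distrib,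
      Finset.sum_sub_distrib, ← Finset.sum_mul, ← Finset.mul_sum, ← Finset.sum_mul,
      ← Finset.mul_sum, ← e1, ← e2, e0]
    noncomm_ring
  rw [← sub_nonneg, key]
  exact Finset.sum_nonneg fun t _ => star_left_conjugate_nonneg (hpos _ (hp0 t)) _

/-- With `x = a + i b`, the defect of `x` is the sum of the defects of `a` and `b`, to which
Kadison's inequality applies. -/
lemma defect_nonneg [FiniteDimensional ℂ M] {φ : M →ₗ[ℂ] M} (hunit : φ 1 = 1)
    (hpos : ∀ x : M, 0 ≤ x → 0 ≤ φ x) (x : M) : 0 ≤ defect φ x := by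
  have hx := realPart_add_I_smul_imaginaryPart x
  have ha := (ℜ x).2
  have hb := (ℑ x).2
  set a : M := (ℜ x : M)
  set b : M := (ℑ x : M)
  have ha' : IsSelfAdjoint a := ha
  have hb' : IsSelfAdjoint b := hb
  have h1 : star x = a - Complex.I • b := by
    rw [← hx]; simp [ha'.star_eq, hb'.star_eq, sub_eq_add_neg]
  have h2 : star (φ x) = φ a - Complex.I • φ b := by
    rw [← map_star_of_pos hpos, h1]; simp
  have h3 : φ x = φ a + Complex.I • φ b := by
    rw [← hx]; simp
  rw [defect, h1, h2, h3, ← hx, jordan_star_self, jordan_star_self, map_add]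
  have := add_le_add (kadison hunit hpos ha') (kadison hunit hpos hb')
  exact sub_nonneg.2 this

lemma defect_star {φ : M →ₗ[ℂ] M} (hpos : ∀ x : M, 0 ≤ x → 0 ≤ φ x) (x : M) :
    defect φ (star x) = defect φ x := by
  simp only [defect, jordan, map_star_of_pos hpos, star_star]
  rw [add_comm (x * star x), add_comm (φ x * star (φ x))]

/-! ### The definite set -/

/-- The definite set as a subspace; closure under addition follows from the parallelogram law and
positivity of the defect. -/
noncomputable def definiteSubmodule [FiniteDimensional ℂ M] {φ : M →ₗ[ℂ] M} (hunit : φ 1 = 1)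
    (hpos : ∀ x : M, 0 ≤ x → 0 ≤ φ x) : Submodule ℂ M where
  carrier := definiteSet φ
  zero_mem' := by simp [definiteSet, jordan]
  add_mem' := by
    intro x y hx hy
    rw [mem_definiteSet_iff] at *
    have h := defect_parallelogram φ x y
    rw [hx, hy, smul_zero, add_zero] at h
    exact ((add_eq_zero_iff_of_nonneg (defect_nonneg hunit hpos _)
      (defect_nonneg hunit hpos _)).1 h).1
  smul_mem' := by
    intro c x hx
    rw [mem_definiteSet_iff] at *
    rw [defect_smul, hx, smul_zero]

/-- Self-adjoint elements of the definite set are Jordan multiplicative against every self-adjoint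
`y`: the defect of `y + t a` is affine in the real number `t` and nonnegative, so its slope is zero. -/
lemma map_jordan_of_mem [FiniteDimensional ℂ M] {φ : M →ₗ[ℂ] M} (hunit : φ 1 = 1)
    (hpos : ∀ x : M, 0 ≤ x → 0 ≤ φ x) {a y : M} (ha : IsSelfAdjoint a) (hy : IsSelfAdjoint y)
    (hmem : a ∈ definiteSet φ) : φ (jordan a y) = jordan (φ a) (φ y) := by
  rw [mem_definiteSet_iff] at hmem
  set d := φ (jordan a y) - jordan (φ a) (φ y) with hd
  have hexp : ∀ t : ℝ, defect φ (y + (t : ℂ) • a) = defect φ y + (2 * t) • d := by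
    intro t
    have h0 : defect φ (y + (t : ℂ) • a)
        = defect φ y + (2 * t : ℂ) • d + ((t : ℂ) * t) • defect φ a := by
      simp only [hd, defect, jordan, map_add, map_smul, star_add, star_smul, add_mul, mul_add,
        smul_mul_assoc, mul_smul_comm, ha.star_eq, hy.star_eq,
        (isSelfAdjoint_map_of_pos hpos ha).star_eq, (isSelfAdjoint_map_of_pos hpos hy).star_eq,
        Complex.star_def, Complex.conj_ofReal]
      module
    rw [h0, hmem, smul_zero, add_zero, ← Complex.coe_smul]
    simp
  have hnn : ∀ t : ℝ, 0 ≤ defect φ y + t • d := by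
    intro t
    have := defect_nonneg hunit hpos (y + ((t / 2 : ℝ) : ℂ) • a)
    rwa [hexp, mul_div_cancel₀ _ (two_ne_zero' ℝ)] at this
  have hlim : ∀ e : M, (∀ n : ℕ, 0 ≤ defect φ y + ((n + 1 : ℝ)) • e) → 0 ≤ e := by
    intro e he
    have hl : Tendsto (fun n : ℕ => (1 / ((n : ℝ) + 1)) • defect φ y + e) atTop (𝓝 e) := by
      simpa using (tendsto_one_div_add_atTop_nhds_zero_nat (𝕜 := ℝ)).smul_const
        (defect φ y) |>.add_const e
    refine ge_of_tendsto' hl fun n => ?_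
    have hn : (0 : ℝ) < n + 1 := by positivity
    have := smul_nonneg (by positivity : (0 : ℝ) ≤ 1 / ((n : ℝ) + 1)) (he n)
    rwa [smul_add, smul_smul, one_div_mul_cancel hn.ne', one_smul] at this
  have h1 : 0 ≤ d := hlim d fun n => hnn _
  have h2 : 0 ≤ -d := hlim (-d) fun n => by
    have := hnn (-(n + 1 : ℝ))
    rwa [neg_smul, ← smul_neg] at this
  exact sub_eq_zero.1 (le_antisymm (neg_nonneg.1 h2) h1)

lemma map_sq_of_mem {φ : M →ₗ[ℂ] M}
    (hpos : ∀ x : M, 0 ≤ x → 0 ≤ φ x) {a : M} (ha : IsSelfAdjoint a)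
    (hmem : a ∈ definiteSet φ) : φ (a * a) = φ a * φ a := by
  have h : φ (jordan (star a) a) = jordan (star (φ a)) (φ a) := hmem
  have hj : ∀ z : M, jordan z z = z * z := fun z => by simp only [jordan]; module
  rwa [ha.star_eq, (isSelfAdjoint_map_of_pos hpos ha).star_eq, hj, hj] at h

/-- The square of a self-adjoint definite element is definite: `map_jordan_of_mem` gives
`φ(a³) = φ(a)³` and then `φ(a⁴) = φ(a)⁴`. -/
lemma sq_mem_definiteSet [FiniteDimensional ℂ M] {φ : M →ₗ[ℂ] M} (hunit : φ 1 = 1)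
    (hpos : ∀ x : M, 0 ≤ x → 0 ≤ φ x) {a : M} (ha : IsSelfAdjoint a)
    (hmem : a ∈ definiteSet φ) : a * a ∈ definiteSet φ := by
  have hj : ∀ z w : M, z * w = w * z → jordan z w = z * w := fun z w h => by
    simp only [jordan, ← h]; module
  have h2 : IsSelfAdjoint (a * a) := by simpa [ha.star_eq] using IsSelfAdjoint.star_mul_self a
  have h3 : IsSelfAdjoint (a * (a * a)) := by
    rw [isSelfAdjoint_iff, star_mul, star_mul, ha.star_eq, mul_assoc]
  have e2 := map_sq_of_mem hpos ha hmem
  have e3 : φ (a * (a * a)) = φ a * (φ a * φ a) := by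
    have := map_jordan_of_mem hunit hpos ha h2 hmem
    rwa [hj a (a * a) (by noncomm_ring), e2, hj _ _ (by noncomm_ring)] at this
  have e4 : φ (a * (a * (a * a))) = φ a * (φ a * (φ a * φ a)) := by
    have := map_jordan_of_mem hunit hpos ha h3 hmem
    rwa [hj a (a * (a * a)) (by noncomm_ring), e3, hj _ _ (by noncomm_ring)] at this
  change φ (jordan (star (a * a)) (a * a)) = jordan (star (φ (a * a))) (φ (a * a))
  rw [h2.star_eq, (isSelfAdjoint_map_of_pos hpos h2).star_eq, hj _ _ rfl, hj _ _ rfl, e2]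
  simpa only [mul_assoc] using e4

/-! ### The multiplicative core -/

/-- A bound on `φ^n` uniform in `n`, obtained by writing `x` as a combination of four positive
elements. -/
lemma norm_pow_apply_le {φ : M →ₗ[ℂ] M} (hunit : φ 1 = 1)
    (hpos : ∀ x : M, 0 ≤ x → 0 ≤ φ x) (n : ℕ) (x : M) :
    ‖(φ ^ n) x‖ ≤ 4 * ‖(1 : M)‖ * ‖x‖ := by
  obtain ⟨y, hy0, hyn, hy⟩ := CStarAlgebra.exists_sum_four_nonneg x
  have hb : ∀ i, ‖(φ ^ n) (y i)‖ ≤ ‖(1 : M)‖ * ‖x‖ := fun i => by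
    have h := PositiveLinearMap.norm_apply_le_of_nonneg
      (PositiveLinearMap.mk₀ (φ ^ n) (pow_nonneg_of_pos hpos n)) (y i) (hy0 i)
    change ‖(φ ^ n) (y i)‖ ≤ ‖(φ ^ n) 1‖ * ‖y i‖ at h
    rw [pow_unital hunit] at h
    exact h.trans (mul_le_mul_of_nonneg_left (hyn i) (norm_nonneg _))
  calc ‖(φ ^ n) x‖ = ‖∑ i : Fin 4, Complex.I ^ (i : ℕ) • (φ ^ n) (y i)‖ := by
        conv_lhs => rw [hy]
        simp only [map_sum, map_smul]
    _ ≤ ∑ _i : Fin 4, ‖(1 : M)‖ * ‖x‖ := by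
        refine norm_sum_le_of_le _ fun i _ => ?_
        rw [norm_smul, norm_pow, Complex.norm_I, one_pow, one_mul]
        exact hb i
    _ = 4 * ‖(1 : M)‖ * ‖x‖ := by simp [mul_assoc]

/-- `B_φ` as a subspace. -/
noncomputable def Bsubmodule [FiniteDimensional ℂ M] {φ : M →ₗ[ℂ] M} (hunit : φ 1 = 1)
    (hpos : ∀ x : M, 0 ≤ x → 0 ≤ φ x) : Submodule ℂ M :=
  (⨅ n : ℕ, (definiteSubmodule hunit hpos).comap (φ ^ n)).copy (Bset φ) (by
    ext x
    simp [Bset, definiteSubmodule])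

lemma star_mem_Bset {φ : M →ₗ[ℂ] M} (hpos : ∀ x : M, 0 ≤ x → 0 ≤ φ x) {x : M}
    (hx : x ∈ Bset φ) : star x ∈ Bset φ := fun n => by
  have := hx n
  rw [mem_definiteSet_iff] at *
  rw [map_star_of_pos (pow_nonneg_of_pos hpos n), defect_star hpos, this]

lemma pow_map_sq_of_mem_Bset {φ : M →ₗ[ℂ] M}
    (hpos : ∀ x : M, 0 ≤ x → 0 ≤ φ x) {a : M} (ha : IsSelfAdjoint a)
    (hmem : a ∈ Bset φ) (n : ℕ) : (φ ^ n) (a * a) = (φ ^ n) a * (φ ^ n) a := by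
  induction n with
  | zero => simp
  | succ n ih =>
    simp only [pow_succ', Module.End.mul_apply] at ih ⊢
    rw [ih, map_sq_of_mem hpos (isSelfAdjoint_map_of_pos (pow_nonneg_of_pos hpos n) ha) (hmem n)]

lemma sq_mem_Bset [FiniteDimensional ℂ M] {φ : M →ₗ[ℂ] M} (hunit : φ 1 = 1)
    (hpos : ∀ x : M, 0 ≤ x → 0 ≤ φ x) {a : M} (ha : IsSelfAdjoint a)
    (hmem : a ∈ Bset φ) : a * a ∈ Bset φ := fun n => by
  rw [pow_map_sq_of_mem_Bset hpos ha hmem]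
  exact sq_mem_definiteSet hunit hpos
    (isSelfAdjoint_map_of_pos (pow_nonneg_of_pos hpos n) ha) (hmem n)

/-- The decreasing chain of subspaces `φ^n(B_φ)` stabilizes, so `C_φ` is one of them, and `φ` maps
`C_φ` onto itself. -/
lemma exists_multCore_eq_map [FiniteDimensional ℂ M] {φ : M →ₗ[ℂ] M} (hunit : φ 1 = 1)
    (hpos : ∀ x : M, 0 ≤ x → 0 ≤ φ x) :
    ∃ N : ℕ, multCore φ = ((Bsubmodule hunit hpos).map (φ ^ N) : Submodule ℂ M) ∧
      ((Bsubmodule hunit hpos).map (φ ^ N)).map φ = (Bsubmodule hunit hpos).map (φ ^ N) := by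
  have hanti : Antitone fun n : ℕ => (Bsubmodule hunit hpos).map (φ ^ n) := by
    refine antitone_nat_of_succ_le fun n => ?_
    rw [Submodule.map_le_iff_le_comap]
    intro x hx
    refine ⟨φ x, map_mem_Bset hx, ?_⟩
    rw [pow_succ, Module.End.mul_apply]
  obtain ⟨N, hN⟩ := IsArtinian.monotone_stabilizes (R := ℂ) (M := M)
    ⟨fun n => OrderDual.toDual ((Bsubmodule hunit hpos).map (φ ^ n)), fun m n h => hanti h⟩
  have hN' : ∀ m, N ≤ m →
      (Bsubmodule hunit hpos).map (φ ^ N) = (Bsubmodule hunit hpos).map (φ ^ m) := hN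
  refine ⟨N, ?_, ?_⟩
  · ext x
    simp only [multCore, Set.mem_iInter]
    constructor
    · intro h
      rw [hN' (N + 1) (Nat.le_succ N)]
      exact h (N + 1) (by omega)
    · intro h n _
      have h' : x ∈ (Bsubmodule hunit hpos).map (φ ^ n) := by
        rcases le_total N n with hn | hn
        · exact hN' n hn ▸ h
        · exact hanti hn h
      exact h'
  · rw [← Submodule.map_comp, ← Module.End.mul_eq_comp, ← pow_succ']
    exact (hN' _ (Nat.le_succ N)).symm

lemma le_of_forall_pow_two_pow_le {s r K : ℝ} (hr : 0 ≤ r)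
    (h : ∀ k : ℕ, s ^ 2 ^ k ≤ K * r ^ 2 ^ k) : s ≤ r := by
  by_contra! hlt
  have hs : 0 < s := hr.trans_lt hlt
  rcases hr.eq_or_lt with h0 | h0
  · have := h 0
    simp [← h0] at this
    linarith
  · have h1 : 1 < s / r := (one_lt_div h0).2 hlt
    have h2 : Tendsto (fun k : ℕ => (s / r) ^ 2 ^ k) atTop atTop :=
      (tendsto_pow_atTop_atTop_of_one_lt h1).comp
        (tendsto_pow_atTop_atTop_of_one_lt one_lt_two)
    obtain ⟨k, hk⟩ := (h2.eventually_gt_atTop K).exists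
    rw [div_pow, lt_div_iff₀ (by positivity)] at hk
    exact absurd (h k) (not_le.2 hk)

/-- `C_φ ⊆ M_∞`. On `C_φ` the map `φ` is bijective, hence bounded below by some constant; since it
preserves the squares of self-adjoint elements, applying this bound to `x^(2^k)` improves the
constant to `1` for self-adjoint `x`. Preimages in `C_φ` under `φ^n` are therefore bounded
uniformly in `n`. -/
lemma multCore_subset_tailSystem [FiniteDimensional ℂ M] {φ : M →ₗ[ℂ] M} (hunit : φ 1 = 1)
    (hpos : ∀ x : M, 0 ≤ x → 0 ≤ φ x) : multCore φ ⊆ tailSystem φ := by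
  obtain ⟨N, hC, hmap⟩ := exists_multCore_eq_map hunit hpos
  set C := (Bsubmodule hunit hpos).map (φ ^ N) with hCdef
  rw [hC]
  have hCB : ∀ x ∈ C, x ∈ Bset φ := by
    rintro _ ⟨b, hb, rfl⟩
    exact pow_mem_Bset hb N
  have hφC : ∀ x ∈ C, φ x ∈ C := fun x hx => hmap ▸ Submodule.mem_map_of_mem hx
  have hstar : ∀ x ∈ C, star x ∈ C := by
    rintro _ ⟨b, hb, rfl⟩
    exact ⟨star b, star_mem_Bset hpos hb, map_star_of_pos (pow_nonneg_of_pos hpos N) b⟩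
  have hre : ∀ x ∈ C, (ℜ x : M) ∈ C := by
    intro x hx
    rw [realPart_apply_coe, ← Complex.coe_smul]
    exact C.smul_mem _ (C.add_mem hx (hstar x hx))
  have him : ∀ x ∈ C, (ℑ x : M) ∈ C := by
    intro x hx
    rw [imaginaryPart_apply_coe, ← Complex.coe_smul]
    exact C.smul_mem _ (C.smul_mem _ (C.sub_mem hx (hstar x hx)))
  have hsq : ∀ x ∈ C, IsSelfAdjoint x → x * x ∈ C := by
    rintro _ ⟨b, hb, rfl⟩ hx
    -- A self-adjoint element of `C` has a self-adjoint preimage in `B_φ`.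
    have hb' : (ℜ b : M) ∈ Bsubmodule hunit hpos := by
      rw [realPart_apply_coe, ← Complex.coe_smul]
      exact Submodule.smul_mem _ _ (Submodule.add_mem _ hb (star_mem_Bset hpos hb))
    have hval : (φ ^ N) (ℜ b : M) = (φ ^ N) b := by
      rw [realPart_apply_coe, ← Complex.coe_smul, map_smul, map_add,
        map_star_of_pos (pow_nonneg_of_pos hpos N), hx.star_eq]
      push_cast
      module
    refine ⟨(ℜ b : M) * (ℜ b : M), sq_mem_Bset hunit hpos (ℜ b).2 hb', ?_⟩
    rw [pow_map_sq_of_mem_Bset hpos (ℜ b).2 hb', hval]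
  have hpow : ∀ x ∈ C, IsSelfAdjoint x → ∀ k : ℕ,
      x ^ 2 ^ k ∈ C ∧ φ (x ^ 2 ^ k) = φ x ^ 2 ^ k := by
    intro x hx hxs k
    induction k with
    | zero => simpa using hx
    | succ k ih =>
      have e : ∀ z : M, z ^ 2 ^ (k + 1) = z ^ 2 ^ k * z ^ 2 ^ k := fun z => by
        rw [← pow_add]; congr 1; ring
      rw [e, e, ← ih.2]
      exact ⟨hsq _ ih.1 (hxs.pow _), map_sq_of_mem hpos (hxs.pow _) (hCB _ ih.1 0)⟩
  -- `φ` is a bijection of the finite-dimensional space `C`, hence bounded below there.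
  obtain ⟨K, hK⟩ : ∃ K : ℝ, ∀ x ∈ C, ‖x‖ ≤ K * ‖φ x‖ := by
    set g : C →ₗ[ℂ] C := φ.restrict hφC with hg
    have hsurj : Function.Surjective g := by
      rintro ⟨y, hy⟩
      rw [← hmap] at hy
      obtain ⟨x, hx, hxy⟩ := hy
      exact ⟨⟨x, hx⟩, Subtype.ext hxy⟩
    have hinj := LinearMap.injective_iff_surjective.2 hsurj
    obtain ⟨K, _, hK⟩ := g.exists_antilipschitzWith (LinearMap.ker_eq_bot.2 hinj)
    refine ⟨K, fun x hx => ?_⟩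
    have := hK.le_mul_dist ⟨x, hx⟩ 0
    simpa [g, dist_zero_right] using this
  have hsa : ∀ x ∈ C, IsSelfAdjoint x → ‖x‖ ≤ ‖φ x‖ := by
    intro x hx hxs
    refine le_of_forall_pow_two_pow_le (K := K) (norm_nonneg _) fun k => ?_
    have h := hK _ (hpow x hx hxs k).1
    rwa [(hpow x hx hxs k).2, hxs.norm_pow_two_pow,
      (isSelfAdjoint_map_of_pos hpos hxs).norm_pow_two_pow] at h
  have hsan : ∀ (n : ℕ), ∀ x ∈ C, IsSelfAdjoint x → ‖x‖ ≤ ‖(φ ^ n) x‖ := by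
    intro n
    induction n with
    | zero => simp
    | succ n ih =>
      intro x hx hxs
      rw [pow_succ, Module.End.mul_apply]
      exact (hsa x hx hxs).trans (ih _ (hφC x hx) (isSelfAdjoint_map_of_pos hpos hxs))
  have hsurjn : ∀ (n : ℕ), ∀ y ∈ C, ∃ x ∈ C, (φ ^ n) x = y := by
    intro n
    induction n with
    | zero => exact fun y hy => ⟨y, hy, rfl⟩
    | succ n ih =>
      intro y hy
      obtain ⟨z, hz, rfl⟩ := ih y hy
      rw [← hmap] at hz
      obtain ⟨x, hx, rfl⟩ := hz
      exact ⟨x, hx, by rw [pow_succ, Module.End.mul_apply]⟩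
  intro y hy
  refine ⟨‖(ℜ y : M)‖ + ‖(ℑ y : M)‖ + 1, by positivity, fun n _ => ?_⟩
  obtain ⟨x, hx, rfl⟩ := hsurjn n y hy
  refine ⟨x, ?_, rfl⟩
  have hst := map_star_of_pos (pow_nonneg_of_pos hpos n)
  have h1 : (φ ^ n) (ℜ x : M) = (ℜ ((φ ^ n) x) : M) := by
    simp only [realPart_apply_coe, ← Complex.coe_smul, map_smul, map_add, hst]
  have h2 : (φ ^ n) (ℑ x : M) = (ℑ ((φ ^ n) x) : M) := by
    simp only [imaginaryPart_apply_coe, ← Complex.coe_smul, map_smul, map_sub, hst]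
  have h3 := hsan n _ (hre x hx) (ℜ x).2
  have h4 := hsan n _ (him x hx) (ℑ x).2
  rw [h1] at h3
  rw [h2] at h4
  have h5 : ‖x‖ ≤ ‖(ℜ x : M)‖ + ‖(ℑ x : M)‖ := by
    conv_lhs => rw [← realPart_add_I_smul_imaginaryPart x]
    refine (norm_add_le _ _).trans_eq ?_
    rw [norm_smul, Complex.norm_I, one_mul]
  linarith

/-! ### Functionals and the tail system -/

/-- A functional vanishing on `M_∞` satisfies `‖ρ ∘ φ^n‖ → 0`: otherwise some limit point `y` of
vectors `φ^(n_m)(x_m)` with `‖x_m‖ ≤ 1` has `ρ(y) ≠ 0`, while limit points of `φ^(n_m - k)(x_m)`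
are bounded preimages of `y` under `φ^k`. -/
lemma tendsto_of_vanish_tailSystem [FiniteDimensional ℂ M] {φ : M →ₗ[ℂ] M} (hunit : φ 1 = 1)
    (hpos : ∀ x : M, 0 ≤ x → 0 ≤ φ x) {ρ : M →ₗ[ℂ] ℂ} (hρ : ∀ y ∈ tailSystem φ, ρ y = 0) :
    Tendsto (fun n : ℕ => ‖LinearMap.toContinuousLinearMap (ρ ∘ₗ (φ ^ n))‖) atTop (𝓝 0) := by
  have : ProperSpace M := FiniteDimensional.proper ℂ M
  set R : ℝ := 4 * ‖(1 : M)‖ with hR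
  by_contra hcon
  rw [Metric.tendsto_atTop] at hcon
  push Not at hcon
  obtain ⟨ε, hε, hfreq⟩ := hcon
  have hex : ∀ m : ℕ, ∃ n ≥ m, ∃ x : M, ‖x‖ ≤ 1 ∧ ε / 2 ≤ ‖ρ ((φ ^ n) x)‖ := by
    intro m
    obtain ⟨n, hn, h⟩ := hfreq m
    refine ⟨n, hn, ?_⟩
    by_contra! hlt
    rw [dist_zero_right, norm_norm] at h
    have := ContinuousLinearMap.opNorm_le_of_unit_norm (𝕜 := ℂ) (C := ε / 2)
      (f := LinearMap.toContinuousLinearMap (ρ ∘ₗ (φ ^ n))) (by positivity)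
      (fun x hx => (hlt x hx.le).le)
    linarith
  choose n hn x hx hρx using hex
  have hbdd : ∀ k m : ℕ, (φ ^ k) (x m) ∈ Metric.closedBall (0 : M) R := fun k m => by
    rw [mem_closedBall_zero_iff]
    calc _ ≤ R * ‖x m‖ := norm_pow_apply_le hunit hpos k (x m)
      _ ≤ R * 1 := mul_le_mul_of_nonneg_left (hx m) (by positivity)
      _ = R := mul_one R
  obtain ⟨y, _, σ, hσ, hlim⟩ :=
    (isCompact_closedBall (0 : M) R).tendsto_subseq (fun m => hbdd (n m) m)
  have hρc : Continuous ρ := ρ.continuous_of_finiteDimensional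
  have hy : y ∈ tailSystem φ := by
    refine ⟨R + 1, by positivity, fun k _ => ?_⟩
    obtain ⟨z, hz, τ, hτ, hlim'⟩ := (isCompact_closedBall (0 : M) R).tendsto_subseq
      (fun m => hbdd (n (σ m) - k) (σ m))
    refine ⟨z, (mem_closedBall_zero_iff.1 hz).trans (by linarith), ?_⟩
    have h1 := (((φ ^ k).continuous_of_finiteDimensional).tendsto z).comp hlim'
    have h2 := hlim.comp hτ.tendsto_atTop
    refine tendsto_nhds_unique (h1.congr' ?_) h2
    filter_upwards [eventually_ge_atTop k] with m hm
    have hk : k ≤ n (σ (τ m)) :=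
      hm.trans ((hτ.id_le m).trans ((hσ.id_le _).trans (hn _)))
    simp only [Function.comp_apply]
    rw [← Module.End.mul_apply, ← pow_add, Nat.add_sub_cancel' hk]
  have hge : ε / 2 ≤ ‖ρ y‖ :=
    ge_of_tendsto' ((hρc.norm.tendsto y).comp hlim) fun m => hρx (σ m)
  rw [hρ y hy, norm_zero] at hge
  linarith

end Positive

lemma vanish_on_tailSystem_of_tendsto {M : Type*} [CStarAlgebra M]
    [FiniteDimensional ℂ M] {φ : M →ₗ[ℂ] M} {ρ : M →ₗ[ℂ] ℂ}
    (hρ : Tendsto (fun n : ℕ => ‖LinearMap.toContinuousLinearMap (ρ ∘ₗ (φ ^ n))‖) atTop (𝓝 0))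
    {y : M} (hy : y ∈ tailSystem φ) : ρ y = 0 := by
  obtain ⟨C, _, hC⟩ := hy
  have h := hρ.mul_const C
  rw [zero_mul] at h
  refine norm_le_zero_iff.1 (ge_of_tendsto h ?_)
  filter_upwards [eventually_ge_atTop 1] with n hn
  obtain ⟨x, hx, rfl⟩ := hC n hn
  exact ((LinearMap.toContinuousLinearMap (ρ ∘ₗ (φ ^ n))).le_opNorm x).trans
    (mul_le_mul_of_nonneg_left hx (norm_nonneg _))

/-- for a UP map on a finite-dimensional C*-algebra, `M_∞ = C_φ` iff
`‖ρ ∘ φ^n‖ → 0` for every linear functional `ρ` vanishing on `C_φ`. -/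
theorem tailSystem_eq_multCore_iff_functionals_vanish
    {M : Type*} [CStarAlgebra M] [PartialOrder M] [StarOrderedRing M]
    [FiniteDimensional ℂ M]
    (φ : M →ₗ[ℂ] M) (hunit : φ 1 = 1)
    (hpos : ∀ x : M, 0 ≤ x → 0 ≤ φ x) :
    tailSystem φ = multCore φ ↔
      ∀ ρ : M →ₗ[ℂ] ℂ, (∀ y ∈ multCore φ, ρ y = 0) →
        Tendsto (fun n : ℕ =>
            ‖LinearMap.toContinuousLinearMap (ρ ∘ₗ (φ ^ n))‖) atTop (𝓝 0) := by
  constructor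
  · intro h ρ hρ
    exact tendsto_of_vanish_tailSystem hunit hpos (h ▸ hρ)
  · intro h
    refine Set.Subset.antisymm (fun y hy => ?_) (multCore_subset_tailSystem hunit hpos)
    obtain ⟨N, hC, _⟩ := exists_multCore_eq_map hunit hpos
    by_contra hn
    rw [hC] at hn
    obtain ⟨ρ, hρy, hρ⟩ := Submodule.exists_le_ker_of_notMem hn
    exact hρy (vanish_on_tailSystem_of_tendsto (h ρ fun z hz => hρ (hC.subset hz)) hy)
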